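/- Fix an integer m ≥ 1. Let d_n be the unique positive solution of Σ_{j=1}^∞ j·e^{−jd}/(1 − e^{−jd}) = n and set δ_n = d_n^{4/3}/log n. Then, as n → ∞, the central integral J₁(m,n) = (e^{n d_n}/(2π))·∫_{−δ_n}^{δ_n} g(e^{−d_n + iθ})·F_m(e^{−d_n + iθ})·e^{−iθn} dθ satisfies J₁(m,n) ∼ p(n)·(n/ζ(2))^{(m+1)/2}·m!·ζ(m+1). -/

import Mathlib

open Filter Asymptotics Topology

/-- `aFun d = Σ_{j≥1} j·e^{−jd}/(1 − e^{−jd})`. -/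
noncomputable def aFun (d : ℝ) : ℝ :=
  ∑' j : ℕ, (j + 1 : ℝ) * Real.exp (-(j + 1) * d) / (1 - Real.exp (-(j + 1) * d))

/-- `gC x = ∏_{j≥1} (1 − x^j)⁻¹` (complex Euler product), for `|x| < 1`. -/
noncomputable def gC (x : ℂ) : ℂ := ∏' j : ℕ, (1 - x ^ (j + 1))⁻¹

/-- `FC m x = Σ_{j≥1} j^m x^j/(1 − x^j)`, for `|x| < 1`. -/
noncomputable def FC (m : ℕ) (x : ℂ) : ℂ :=
  ∑' j : ℕ, (j + 1 : ℂ) ^ m * x ^ (j + 1) / (1 - x ^ (j + 1))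

/-- One-variable sum `Σ_{j≥1} j^a e^{-js}`. -/
noncomputable def Phi (a : ℕ) (s : ℝ) : ℝ := ∑' j : ℕ, (j + 1 : ℝ) ^ a * Real.exp (-((j + 1) * s))

lemma Phi_summable (a : ℕ) {s : ℝ} (hs : 0 < s) :
    Summable (fun j : ℕ => (j + 1 : ℝ) ^ a * Real.exp (-((j + 1) * s))) := by
  have h := Real.summable_pow_mul_exp_neg_nat_mul a hs
  have h2 := (summable_nat_add_iff 1).2 h
  refine h2.congr ?_
  intro j
  push_cast
  congr 2
  ring

lemma Phi_upper (a : ℕ) {s : ℝ} (hs : 0 < s) :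
    Phi a s ≤ a.factorial * Real.exp (-s) / (1 - Real.exp (-s)) ^ (a + 1) := by
  have hr : ‖Real.exp (-s)‖ < 1 := by
    rw [Real.norm_of_nonneg (Real.exp_pos _).le]; simpa using hs
  have h1 := summable_choose_mul_geometric_of_norm_lt_one a hr
  have h2 := tsum_choose_mul_geometric_of_norm_lt_one a hr
  have : a.factorial * Real.exp (-s) / (1 - Real.exp (-s)) ^ (a + 1)
      = ∑' n : ℕ, (a.factorial * Real.exp (-s)) * (((n + a).choose a : ℝ) * Real.exp (-s) ^ n) := by
    rw [tsum_mul_left, h2]; ring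
  rw [this, Phi]
  refine Summable.tsum_le_tsum ?_ (Phi_summable a hs) (h1.mul_left _)
  intro j
  have e1 : Real.exp (-((j + 1) * s)) = Real.exp (-s) * Real.exp (-s) ^ j := by
    rw [← Real.exp_nat_mul, ← Real.exp_add]; congr 1; ring
  have e2 : ((j : ℝ) + 1) ^ a ≤ a.factorial * ((j + a).choose a : ℝ) := by
    have := Nat.pow_succ_le_ascFactorial (j + 1) a
    rw [Nat.ascFactorial_eq_factorial_mul_choose] at this
    exact_mod_cast this
  rw [e1]
  calc _ ≤ (a.factorial * ((j + a).choose a : ℝ)) * (Real.exp (-s) * Real.exp (-s) ^ j) := by gcongr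
    _ = _ := by ring

lemma Phi_lower (a : ℕ) (ha : 1 ≤ a) {s : ℝ} (hs : 0 < s) :
    a.factorial * Real.exp (-s) ^ a / (1 - Real.exp (-s)) ^ (a + 1) ≤ Phi a s := by
  have hr : ‖Real.exp (-s)‖ < 1 := by
    rw [Real.norm_of_nonneg (Real.exp_pos _).le]; simpa using hs
  have h1 := summable_choose_mul_geometric_of_norm_lt_one a hr
  have h2 := tsum_choose_mul_geometric_of_norm_lt_one a hr
  have : a.factorial * Real.exp (-s) ^ a / (1 - Real.exp (-s)) ^ (a + 1)
      = ∑' n : ℕ, (a.factorial * Real.exp (-s) ^ a) *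
        (((n + a).choose a : ℝ) * Real.exp (-s) ^ n) := by
    rw [tsum_mul_left, h2]; ring
  rw [this, Phi]
  refine Summable.tsum_le_tsum_of_inj (fun i => i + (a - 1)) (fun x y h => by simpa using h)
    (fun c _ => by positivity) ?_ (h1.mul_left _) (Phi_summable a hs)
  intro j
  obtain ⟨b, rfl⟩ : ∃ b, a = b + 1 := ⟨a - 1, by omega⟩
  have e1 : Real.exp (-((((j + b : ℕ) : ℝ) + 1) * s)) = Real.exp (-s) ^ (b + 1) * Real.exp (-s) ^ j := by
    rw [← Real.exp_nat_mul, ← Real.exp_nat_mul, ← Real.exp_add]; congr 1; push_cast; ring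
  have e2 : ((b + 1).factorial * ((j + (b + 1)).choose (b + 1) : ℝ)) ≤ (((j + b : ℕ) : ℝ) + 1) ^ (b + 1) := by
    have := Nat.descFactorial_le_pow (j + (b + 1)) (b + 1)
    rw [Nat.descFactorial_eq_factorial_mul_choose] at this
    have h3 : (((b + 1).factorial * ((j + (b + 1)).choose (b + 1)) : ℕ) : ℝ) ≤ ((j + (b + 1)) ^ (b + 1) : ℕ) := by
      exact_mod_cast this
    push_cast at h3 ⊢
    rw [add_assoc]; exact h3
  simp only [Nat.add_sub_cancel]
  rw [e1]
  calc _ = ((b + 1).factorial * ((j + (b + 1)).choose (b + 1) : ℝ)) *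
        (Real.exp (-s) ^ (b + 1) * Real.exp (-s) ^ j) := by ring
    _ ≤ _ := by gcongr

lemma ratio_bound {s : ℝ} (hs : 0 < s) : s / (1 - Real.exp (-s)) ≤ 1 + s := by
  have h0 : 0 < 1 - Real.exp (-s) := by simpa using hs
  rw [div_le_iff₀ h0]
  have h1 : s + 1 ≤ Real.exp s := Real.add_one_le_exp s
  have h2 : Real.exp s * Real.exp (-s) = 1 := by rw [← Real.exp_add]; simp
  nlinarith [Real.exp_pos (-s)]

lemma Phi_bound (a : ℕ) {s : ℝ} (hs : 0 < s) :
    s ^ (a + 1) * Phi a s ≤ a.factorial * ((a + 1).factorial * Real.exp 1) := by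
  have h0 : 0 < 1 - Real.exp (-s) := by simpa using hs
  have h3 : (1 + s) ^ (a + 1) ≤ (a + 1).factorial * Real.exp (1 + s) := by
    have := Real.pow_div_factorial_le_exp (1 + s) (by positivity) (a + 1)
    rw [div_le_iff₀ (by positivity)] at this
    linarith
  calc s ^ (a + 1) * Phi a s
      ≤ s ^ (a + 1) * (a.factorial * Real.exp (-s) / (1 - Real.exp (-s)) ^ (a + 1)) := by
        gcongr; exact Phi_upper a hs
    _ = a.factorial * ((s / (1 - Real.exp (-s))) ^ (a + 1) * Real.exp (-s)) := by
        rw [div_pow]; ring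
    _ ≤ a.factorial * ((1 + s) ^ (a + 1) * Real.exp (-s)) := by
        gcongr
        exact ratio_bound hs
    _ ≤ a.factorial * ((a + 1).factorial * Real.exp (1 + s) * Real.exp (-s)) := by gcongr
    _ = _ := by
        rw [mul_assoc (((a + 1).factorial : ℕ) : ℝ), ← Real.exp_add]; congr 3; ring

lemma Phi_nonneg (a : ℕ) (s : ℝ) : 0 ≤ Phi a s := tsum_nonneg (fun j => by positivity)

lemma ratio_tendsto : Tendsto (fun s : ℝ => s / (1 - Real.exp (-s))) (𝓝[>] 0) (𝓝 1) := by
  have hb : Tendsto (fun s : ℝ => 1 + s) (𝓝[>] 0) (𝓝 1) := by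
    have : Tendsto (fun s : ℝ => 1 + s) (𝓝 0) (𝓝 (1 + 0)) := (continuous_const.add continuous_id).tendsto _
    simpa using this.mono_left nhdsWithin_le_nhds
  refine tendsto_of_tendsto_of_tendsto_of_le_of_le' tendsto_const_nhds hb ?_ ?_
  · filter_upwards [self_mem_nhdsWithin] with s hs
    have hs : 0 < s := hs
    have h0 : 0 < 1 - Real.exp (-s) := by simpa using hs
    rw [le_div_iff₀ h0]
    linarith [Real.add_one_le_exp (-s)]
  · filter_upwards [self_mem_nhdsWithin] with s hs
    exact ratio_bound hs

lemma Phi_tendsto (a : ℕ) (ha : 1 ≤ a) :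
    Tendsto (fun s : ℝ => s ^ (a + 1) * Phi a s) (𝓝[>] 0) (𝓝 a.factorial) := by
  have hexp : Tendsto (fun s : ℝ => Real.exp (-s)) (𝓝[>] 0) (𝓝 1) := by
    have : Tendsto (fun s : ℝ => Real.exp (-s)) (𝓝 0) (𝓝 (Real.exp (-0))) :=
      (Real.continuous_exp.comp continuous_neg).tendsto _
    simpa using this.mono_left nhdsWithin_le_nhds
  have hl : Tendsto (fun s : ℝ => a.factorial * ((s / (1 - Real.exp (-s))) ^ (a + 1) * Real.exp (-s) ^ a))
      (𝓝[>] 0) (𝓝 a.factorial) := by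
    simpa using ((ratio_tendsto.pow (a + 1)).mul (hexp.pow a)).const_mul (a.factorial : ℝ)
  have hu : Tendsto (fun s : ℝ => a.factorial * ((s / (1 - Real.exp (-s))) ^ (a + 1) * Real.exp (-s)))
      (𝓝[>] 0) (𝓝 a.factorial) := by
    simpa using ((ratio_tendsto.pow (a + 1)).mul hexp).const_mul (a.factorial : ℝ)
  refine tendsto_of_tendsto_of_tendsto_of_le_of_le' hl hu ?_ ?_
  · filter_upwards [self_mem_nhdsWithin] with s hs
    have hs : 0 < s := hs
    calc _ = s ^ (a + 1) * (a.factorial * Real.exp (-s) ^ a / (1 - Real.exp (-s)) ^ (a + 1)) := by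
          rw [div_pow]; ring
      _ ≤ _ := by gcongr; exact Phi_lower a ha hs
  · filter_upwards [self_mem_nhdsWithin] with s hs
    have hs : 0 < s := hs
    calc _ ≤ s ^ (a + 1) * (a.factorial * Real.exp (-s) / (1 - Real.exp (-s)) ^ (a + 1)) := by
          gcongr; exact Phi_upper a hs
      _ = _ := by rw [div_pow]; ring

/-- `N = jk` for the index `p = (j-1, k-1)`. -/
noncomputable def NN (p : ℕ × ℕ) : ℝ := ((p.1 : ℝ) + 1) * ((p.2 : ℝ) + 1)

/-- `j^m N^b e^{-Nd}`. -/
noncomputable def WW (m b : ℕ) (d : ℝ) (p : ℕ × ℕ) : ℝ :=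
  ((p.1 : ℝ) + 1) ^ m * NN p ^ b * Real.exp (-(NN p * d))

/-- `Σ_{j,k} j^m (jk)^b e^{-jkd}`. -/
noncomputable def GG (m b : ℕ) (d : ℝ) : ℝ := ∑' p, WW m b d p

lemma NN_pos (p : ℕ × ℕ) : 0 < NN p := by unfold NN; positivity

lemma WW_nonneg (m b : ℕ) (d : ℝ) (p : ℕ × ℕ) : 0 ≤ WW m b d p := by
  unfold WW; have := NN_pos p; positivity

lemma WW_summable (m b : ℕ) {d : ℝ} (hd : 0 < d) : Summable (WW m b d) := by
  have hd2 : 0 < d / 2 := by positivity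
  have h := (Phi_summable (m + b) hd2).mul_of_nonneg (Phi_summable b hd2)
    (fun j => by positivity) (fun j => by positivity)
  refine Summable.of_nonneg_of_le (WW_nonneg m b d) ?_ h
  intro p
  have : Real.exp (-(NN p * d)) ≤ Real.exp (-(((p.1 : ℝ) + 1) * (d / 2))) * Real.exp (-(((p.2 : ℝ) + 1) * (d / 2))) := by
    rw [← Real.exp_add, Real.exp_le_exp, NN]
    have h1 : (0 : ℝ) ≤ p.1 := by positivity
    have h2 : (0 : ℝ) ≤ p.2 := by positivity
    nlinarith [mul_nonneg h1 h2, mul_nonneg (mul_nonneg h1 h2) hd.le, mul_nonneg h1 hd.le, mul_nonneg h2 hd.le]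
  unfold WW
  calc _ ≤ ((p.1 : ℝ) + 1) ^ m * NN p ^ b * (Real.exp (-(((p.1 : ℝ) + 1) * (d / 2))) * Real.exp (-(((p.2 : ℝ) + 1) * (d / 2)))) := by
        have := NN_pos p
        gcongr
    _ = _ := by unfold NN; rw [mul_pow, pow_add]; ring

lemma GG_eq (m b : ℕ) {d : ℝ} (hd : 0 < d) :
    GG m b d = ∑' k : ℕ, ((k : ℝ) + 1) ^ b * Phi (m + b) ((k + 1) * d) := by
  unfold GG
  have h1 := (Equiv.prodComm ℕ ℕ).tsum_eq (WW m b d)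
  rw [← h1, Summable.tsum_prod]
  · refine tsum_congr fun k => ?_
    rw [Phi, ← tsum_mul_left]
    refine tsum_congr fun j => ?_
    simp only [WW, NN, Equiv.prodComm_apply, Prod.swap]
    rw [mul_pow, pow_add, mul_assoc ((j:ℝ)+1) ((k:ℝ)+1) d]; ring
  · exact (Equiv.prodComm ℕ ℕ).summable_iff.2 (WW_summable m b hd)

lemma GG_tendsto (m b : ℕ) (hm : 1 ≤ m) :
    Tendsto (fun d : ℝ => d ^ (m + b + 1) * GG m b d) (𝓝[>] 0)
      (𝓝 ((m + b).factorial * ∑' k : ℕ, (1 : ℝ) / (k + 1) ^ (m + 1))) := by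
  have hs : Summable (fun k : ℕ => (1 : ℝ) / (k + 1) ^ (m + 1)) := by
    have := (summable_nat_add_iff 1).2 (Real.summable_one_div_nat_pow.2 (show 1 < m + 1 by omega))
    simpa using this
  rw [← tsum_mul_left]
  set C : ℝ := ((m + b).factorial * ((m + b + 1).factorial * Real.exp 1))
  have key : Tendsto (fun d : ℝ => ∑' k : ℕ, ((((k : ℝ) + 1) * d) ^ (m + b + 1) * Phi (m + b) ((k + 1) * d)) * (1 / ((k : ℝ) + 1) ^ (m + 1)))
      (𝓝[>] 0) (𝓝 (∑' k : ℕ, ((m + b).factorial : ℝ) * (1 / ((k : ℝ) + 1) ^ (m + 1)))) := by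
    refine tendsto_tsum_of_dominated_convergence (bound := fun k : ℕ => C * (1 / ((k : ℝ) + 1) ^ (m + 1)))
      (hs.mul_left C) ?_ ?_
    · intro k
      refine Tendsto.mul_const _ ?_
      have h1 : Tendsto (fun d : ℝ => ((k : ℝ) + 1) * d) (𝓝[>] 0) (𝓝[>] 0) := by
        refine tendsto_nhdsWithin_iff.2 ⟨?_, ?_⟩
        · have : Tendsto (fun d : ℝ => ((k : ℝ) + 1) * d) (𝓝 0) (𝓝 (((k : ℝ) + 1) * 0)) :=
            (continuous_const.mul continuous_id).tendsto _
          simpa using this.mono_left nhdsWithin_le_nhds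
        · filter_upwards [self_mem_nhdsWithin] with d hd
          have hd : 0 < d := hd
          show 0 < ((k : ℝ) + 1) * d
          positivity
      exact (Phi_tendsto (m + b) (by omega)).comp h1
    · filter_upwards [self_mem_nhdsWithin] with d hd k
      have hd : 0 < d := hd
      have := Phi_nonneg (m + b) ((k + 1) * d)
      rw [Real.norm_of_nonneg (by positivity)]
      gcongr
      exact Phi_bound (m + b) (by positivity)
  refine key.congr' ?_
  filter_upwards [self_mem_nhdsWithin] with d hd
  rw [GG_eq m b hd, ← tsum_mul_left]
  refine tsum_congr fun k => ?_
  have : ((k : ℝ) + 1) ≠ 0 := by positivity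
  rw [mul_pow]
  field_simp
  ring

/-- The point `e^{-d+iθ}`. -/
noncomputable def XX (d θ : ℝ) : ℂ := Complex.exp (-(d : ℂ) + θ * Complex.I)

lemma XX_norm (d θ : ℝ) : ‖XX d θ‖ = Real.exp (-d) := by
  rw [XX, Complex.norm_exp]; simp

lemma XX_pow_norm_lt {d : ℝ} (hd : 0 < d) (θ : ℝ) (j : ℕ) : ‖XX d θ ^ (j + 1)‖ < 1 := by
  rw [norm_pow, XX_norm]
  exact pow_lt_one₀ (Real.exp_pos _).le (by simpa using hd) (by omega)

/-- The phase `e^{iNθ}`. -/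
noncomputable def EE (θ : ℝ) (p : ℕ × ℕ) : ℂ := Complex.exp ((NN p * θ : ℝ) * Complex.I)

lemma EE_norm (θ : ℝ) (p : ℕ × ℕ) : ‖EE θ p‖ = 1 := Complex.norm_exp_ofReal_mul_I _

lemma XX_pow_pow (d θ : ℝ) (p : ℕ × ℕ) :
    (XX d θ ^ (p.1 + 1)) ^ (p.2 + 1) = (Real.exp (-(NN p * d)) : ℂ) * EE θ p := by
  rw [← pow_mul, XX, ← Complex.exp_nat_mul, EE, Complex.ofReal_exp, ← Complex.exp_add, NN]
  congr 1; push_cast; ring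

lemma FC_eq (m : ℕ) {d : ℝ} (hd : 0 < d) (θ : ℝ) :
    FC m (XX d θ) = ∑' p, (WW m 0 d p : ℂ) * EE θ p := by
  have hs : Summable (fun p => (WW m 0 d p : ℂ) * EE θ p) := by
    refine Summable.of_norm ?_
    refine (WW_summable m 0 hd).congr fun p => ?_
    rw [norm_mul, EE_norm, Complex.norm_real, Real.norm_of_nonneg (WW_nonneg _ _ _ _), mul_one]
  rw [Summable.tsum_prod hs, FC]
  refine tsum_congr fun j => ?_
  have hn := XX_pow_norm_lt hd θ j
  have h := tsum_geometric_of_norm_lt_one hn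
  have h2 : (j + 1 : ℂ) ^ m * XX d θ ^ (j + 1) / (1 - XX d θ ^ (j + 1)) =
    ∑' k : ℕ, ((j + 1 : ℂ) ^ m * XX d θ ^ (j + 1)) * (XX d θ ^ (j + 1)) ^ k := by
    rw [tsum_mul_left, h]; rfl
  rw [h2]
  refine tsum_congr fun k => ?_
  have := XX_pow_pow d θ (j, k)
  simp only at this
  rw [mul_assoc, ← pow_succ', this, WW]
  push_cast
  ring

lemma aFun_eq {d : ℝ} (hd : 0 < d) : aFun d = GG 1 0 d := by
  have h := FC_eq 1 hd 0
  have e1 : ∀ p, EE 0 p = 1 := by intro p; simp [EE]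
  simp only [e1, mul_one] at h
  rw [← Complex.ofReal_inj, GG, Complex.ofReal_tsum, ← h, aFun, FC, Complex.ofReal_tsum]
  refine tsum_congr fun j => ?_
  have : XX d 0 ^ (j + 1) = Complex.exp (-(j + 1) * d) := by
    rw [XX, ← Complex.exp_nat_mul]; congr 1; push_cast; ring
  rw [this]
  push_cast
  ring

/-- `e^{-Nd}/k`. -/
noncomputable def VV (d : ℝ) (p : ℕ × ℕ) : ℝ := Real.exp (-(NN p * d)) / ((p.2 : ℝ) + 1)

lemma VV_nonneg (d : ℝ) (p : ℕ × ℕ) : 0 ≤ VV d p := by unfold VV; positivity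

lemma VV_mul (d : ℝ) (b : ℕ) (p : ℕ × ℕ) : VV d p * NN p ^ (b + 1) = WW 1 b d p := by
  unfold VV WW
  rw [pow_succ]
  nth_rewrite 3 [NN]
  have : ((p.2 : ℝ) + 1) ≠ 0 := by positivity
  field_simp

lemma VV_summable {d : ℝ} (hd : 0 < d) : Summable (VV d) := by
  refine Summable.of_nonneg_of_le (VV_nonneg d) ?_ (WW_summable 0 0 hd)
  intro p
  simp only [VV, WW, pow_zero, one_mul]
  exact div_le_self (Real.exp_pos _).le (by linarith [(Nat.cast_nonneg p.2 : (0:ℝ) ≤ p.2)])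

lemma VVE_summable {d : ℝ} (hd : 0 < d) (θ : ℝ) : Summable (fun p => (VV d p : ℂ) * EE θ p) := by
  refine Summable.of_norm ?_
  refine (VV_summable hd).congr fun p => ?_
  rw [norm_mul, EE_norm, Complex.norm_real, Real.norm_of_nonneg (VV_nonneg _ _), mul_one]

lemma gC_tendsto {d : ℝ} (hd : 0 < d) (θ : ℝ) :
    Multipliable (fun j : ℕ => (1 - XX d θ ^ (j + 1))⁻¹) ∧
    gC (XX d θ) = Complex.exp (∑' p, (VV d p : ℂ) * EE θ p) := by
  have hs := VVE_summable hd θ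
  have hlog : ∀ j : ℕ, Complex.log ((1 - XX d θ ^ (j + 1))⁻¹) =
      ∑' k : ℕ, (VV d (j, k) : ℂ) * EE θ (j, k) := by
    intro j
    have hn := XX_pow_norm_lt hd θ j
    have h := Complex.hasSum_taylorSeries_neg_log hn
    have h1 := (hasSum_nat_add_iff' 1).2 h
    simp only [Finset.range_one, Finset.sum_singleton, pow_zero, Nat.cast_zero, div_zero, sub_zero] at h1
    have h2 := h1.tsum_eq
    rw [Complex.log_inv, ← h2]
    · refine tsum_congr fun k => ?_
      have := XX_pow_pow d θ (j, k)
      simp only at this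
      rw [this, VV]
      push_cast
      ring
    · have hre : 0 < (1 - XX d θ ^ (j + 1)).re := by
        have := (Complex.abs_re_le_norm (XX d θ ^ (j + 1))).trans_lt hn
        rw [abs_lt] at this
        simp only [Complex.sub_re, Complex.one_re]
        linarith
      intro harg
      rw [Complex.arg_eq_pi_iff] at harg
      linarith [harg.1]
  have hne : ∀ j : ℕ, (1 - XX d θ ^ (j + 1))⁻¹ ≠ 0 := by
    intro j
    have hn := XX_pow_norm_lt hd θ j
    refine inv_ne_zero (sub_ne_zero.2 ?_)
    intro h; rw [← h] at hn; simp at hn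
  have hs2 : Summable (fun j : ℕ => Complex.log ((1 - XX d θ ^ (j + 1))⁻¹)) := by
    simp only [hlog]; exact hs.prod
  refine ⟨Complex.multipliable_of_summable_log hs2, ?_⟩
  rw [gC, ← Complex.cexp_tsum_eq_tprod hne hs2, Summable.tsum_prod hs]
  simp only [hlog]

lemma gC_eq {d : ℝ} (hd : 0 < d) (θ : ℝ) :
    gC (XX d θ) = Complex.exp (∑' p, (VV d p : ℂ) * EE θ p) := (gC_tendsto hd θ).2

lemma NN_cont (p : ℕ × ℕ) : Continuous (fun θ => EE θ p) := by unfold EE; fun_prop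

lemma gC_cont {d : ℝ} (hd : 0 < d) : Continuous (fun θ : ℝ => gC (XX d θ)) := by
  simp only [gC_eq hd]
  refine Complex.continuous_exp.comp (continuous_tsum (u := VV d) ?_ (VV_summable hd) ?_)
  · intro p; exact continuous_const.mul (NN_cont p)
  · intro p θ
    rw [norm_mul, EE_norm, Complex.norm_real, Real.norm_of_nonneg (VV_nonneg _ _), mul_one]

lemma FC_cont (m : ℕ) {d : ℝ} (hd : 0 < d) : Continuous (fun θ : ℝ => FC m (XX d θ)) := by
  simp only [FC_eq m hd]
  refine (continuous_tsum (u := WW m 0 d) ?_ (WW_summable m 0 hd) ?_)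
  · intro p; exact continuous_const.mul (NN_cont p)
  · intro p θ
    rw [norm_mul, EE_norm, Complex.norm_real, Real.norm_of_nonneg (WW_nonneg _ _ _ _), mul_one]

lemma FC_norm_le (m : ℕ) {d : ℝ} (hd : 0 < d) (θ : ℝ) : ‖FC m (XX d θ)‖ ≤ GG m 0 d := by
  rw [FC_eq m hd]
  refine tsum_of_norm_bounded (WW_summable m 0 hd).hasSum fun p => ?_
  rw [norm_mul, EE_norm, Complex.norm_real, Real.norm_of_nonneg (WW_nonneg _ _ _ _), mul_one]

lemma FC_sub_le (m : ℕ) {d : ℝ} (hd : 0 < d) (θ : ℝ) :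
    ‖FC m (XX d θ) - (GG m 0 d : ℂ)‖ ≤ |θ| * GG m 1 d := by
  have hs : Summable (fun p => (WW m 0 d p : ℂ) * EE θ p) := by
    refine Summable.of_norm ?_
    refine (WW_summable m 0 hd).congr fun p => ?_
    rw [norm_mul, EE_norm, Complex.norm_real, Real.norm_of_nonneg (WW_nonneg _ _ _ _), mul_one]
  have hs2 : Summable (fun p => (WW m 0 d p : ℂ)) := by
    exact_mod_cast (WW_summable m 0 hd)
  rw [FC_eq m hd, GG, Complex.ofReal_tsum, ← Summable.tsum_sub hs hs2]
  refine tsum_of_norm_bounded ((WW_summable m 1 hd).hasSum.mul_left |θ|) fun p => ?_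
  rw [← mul_sub_one, norm_mul, Complex.norm_real, Real.norm_of_nonneg (WW_nonneg _ _ _ _)]
  have h1 : ‖EE θ p - 1‖ ≤ |NN p * θ| := by
    rw [EE, mul_comm]
    exact Real.norm_exp_I_mul_ofReal_sub_one_le
  have h2 : WW m 1 d p = WW m 0 d p * NN p := by simp only [WW]; ring
  rw [h2]
  calc _ ≤ WW m 0 d p * |NN p * θ| := by
        gcongr; exact WW_nonneg _ _ _ _
    _ = _ := by rw [abs_mul, abs_of_pos (NN_pos p)]; ring

/-- Centered exponent. -/
noncomputable def Ex (d θ : ℝ) : ℂ :=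
  ∑' p, (VV d p : ℂ) * (EE θ p - 1 - (NN p * θ : ℝ) * Complex.I)

lemma VVN_summable {d : ℝ} (hd : 0 < d) : Summable (fun p => (VV d p : ℂ) * (NN p : ℂ)) := by
  have := WW_summable 1 0 hd
  have h2 : Summable (fun p => ((WW 1 0 d p : ℝ) : ℂ)) := by exact_mod_cast this
  refine h2.congr fun p => ?_
  rw [← VV_mul]; push_cast; ring

lemma Ex_summable {d : ℝ} (hd : 0 < d) (θ : ℝ) :
    Summable (fun p => (VV d p : ℂ) * (EE θ p - 1 - (NN p * θ : ℝ) * Complex.I)) := by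
  have hV : Summable (fun p => (VV d p : ℂ)) := by exact_mod_cast VV_summable hd
  have := ((VVE_summable hd θ).sub hV).sub ((VVN_summable hd).mul_right (θ * Complex.I))
  refine this.congr fun p => ?_
  push_cast; ring

lemma gC_centered {d : ℝ} (hd : 0 < d) (θ : ℝ) (n : ℕ) (hn : aFun d = n) :
    gC (XX d θ) * Complex.exp (-(θ * n) * Complex.I) = gC (XX d 0) * Complex.exp (Ex d θ) := by
  have hV : Summable (fun p => (VV d p : ℂ)) := by exact_mod_cast VV_summable hd
  rw [gC_eq hd, gC_eq hd, ← Complex.exp_add, ← Complex.exp_add]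
  congr 1
  have e1 : ∀ p, EE 0 p = 1 := by intro p; simp [EE]
  have hE : Ex d θ = ∑' p, (VV d p : ℂ) * EE θ p - ∑' p, (VV d p : ℂ)
      - (∑' p, (VV d p : ℂ) * (NN p : ℂ)) * (θ * Complex.I) := by
    rw [← tsum_mul_right, ← Summable.tsum_sub (VVE_summable hd θ) hV,
      ← Summable.tsum_sub ((VVE_summable hd θ).sub hV) ((VVN_summable hd).mul_right _), Ex]
    refine tsum_congr fun p => ?_
    push_cast; ring
  have hN : (∑' p, (VV d p : ℂ) * (NN p : ℂ)) = n := by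
    have : ((aFun d : ℝ) : ℂ) = n := by rw [hn]; simp
    rw [← this, aFun_eq hd, GG, Complex.ofReal_tsum]
    refine tsum_congr fun p => ?_
    rw [← VV_mul]; push_cast; ring
  rw [hE, hN]
  simp only [e1, mul_one]
  ring

lemma exp_taylor (x : ℝ) :
    ‖Complex.exp (x * Complex.I) - 1 - x * Complex.I + (x : ℂ) ^ 2 / 2‖ ≤ 4 * |x| ^ 3 := by
  rcases le_or_gt |x| 1 with h | h
  · have hx : ‖(x : ℂ) * Complex.I‖ ≤ 1 := by simpa using h
    have := Complex.exp_bound hx (n := 3) (by norm_num)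
    simp only [Finset.sum_range_succ, Finset.range_zero, Finset.sum_empty] at this
    have e : Complex.exp (x * Complex.I) - 1 - x * Complex.I + (x : ℂ) ^ 2 / 2
      = Complex.exp (x * Complex.I) - (0 + (x * Complex.I : ℂ) ^ 0 / ((Nat.factorial 0 : ℕ) : ℂ) +
        (x * Complex.I : ℂ) ^ 1 / ((Nat.factorial 1 : ℕ) : ℂ) + (x * Complex.I : ℂ) ^ 2 / ((Nat.factorial 2 : ℕ) : ℂ)) := by
      simp [mul_pow]; ring
    rw [e]
    refine this.trans ?_
    simp [Nat.factorial]
    nlinarith [pow_nonneg (abs_nonneg x) 3]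
  · have h1 : ‖Complex.exp (x * Complex.I)‖ = 1 := Complex.norm_exp_ofReal_mul_I x
    calc _ ≤ ‖Complex.exp (x * Complex.I)‖ + ‖(1 : ℂ)‖ + ‖(x : ℂ) * Complex.I‖ + ‖(x : ℂ) ^ 2 / 2‖ := by
          refine (norm_add_le _ _).trans ?_
          gcongr
          refine (norm_sub_le _ _).trans ?_
          gcongr
          exact norm_sub_le _ _
      _ = 1 + 1 + |x| + |x| ^ 2 / 2 := by rw [h1]; simp
      _ ≤ _ := by nlinarith [sq_nonneg |x|, pow_pos (lt_trans one_pos h) 2, mul_pos (lt_trans one_pos h) (sub_pos.2 h), mul_pos (pow_pos (lt_trans one_pos h) 2) (sub_pos.2 h)]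

lemma Ex_approx {d : ℝ} (hd : 0 < d) (θ : ℝ) :
    ‖Ex d θ + ((θ ^ 2 / 2 * GG 1 1 d : ℝ) : ℂ)‖ ≤ 4 * |θ| ^ 3 * GG 1 2 d := by
  have h1 : ((θ ^ 2 / 2 * GG 1 1 d : ℝ) : ℂ) = ∑' p, ((θ ^ 2 / 2 * WW 1 1 d p : ℝ) : ℂ) := by
    rw [← Complex.ofReal_tsum, tsum_mul_left, GG]
  have h2 : Summable (fun p => ((θ ^ 2 / 2 * WW 1 1 d p : ℝ) : ℂ)) := by
    exact Complex.summable_ofReal.2 ((WW_summable 1 1 hd).mul_left (θ ^ 2 / 2))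
  rw [h1, Ex, ← Summable.tsum_add (Ex_summable hd θ) h2]
  refine tsum_of_norm_bounded ((WW_summable 1 2 hd).hasSum.mul_left (4 * |θ| ^ 3)) fun p => ?_
  have e : (VV d p : ℂ) * (EE θ p - 1 - (NN p * θ : ℝ) * Complex.I) + ((θ ^ 2 / 2 * WW 1 1 d p : ℝ) : ℂ)
    = (VV d p : ℂ) * (Complex.exp ((NN p * θ : ℝ) * Complex.I) - 1 - (NN p * θ : ℝ) * Complex.I + ((NN p * θ : ℝ) : ℂ) ^ 2 / 2) := by
    rw [← VV_mul, EE]; push_cast; ring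
  rw [e, norm_mul, Complex.norm_real, Real.norm_of_nonneg (VV_nonneg _ _)]
  calc _ ≤ VV d p * (4 * |NN p * θ| ^ 3) := by
        gcongr
        · exact VV_nonneg _ _
        · exact exp_taylor _
    _ = _ := by rw [← VV_mul, abs_mul, abs_of_pos (NN_pos p)]; ring

lemma Ex_re_le {d : ℝ} (hd : 0 < d) (θ : ℝ) :
    (Ex d θ).re ≤ -(1 / (1 - Real.exp (-d)) - ((1 - XX d θ)⁻¹).re) := by
  have hsum := Ex_summable hd θ
  have hre : (Ex d θ).re = ∑' p, -(VV d p * (1 - Real.cos (NN p * θ))) := by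
    rw [Ex, Complex.re_tsum hsum]
    refine tsum_congr fun p => ?_
    rw [Complex.re_ofReal_mul, EE]
    simp only [Complex.sub_re, Complex.exp_ofReal_mul_I_re, Complex.one_re, Complex.re_ofReal_mul,
      Complex.I_re]
    ring
  have hs2 : Summable (fun p => VV d p * (1 - Real.cos (NN p * θ))) := by
    refine Summable.of_nonneg_of_le (fun p => mul_nonneg (VV_nonneg d p) (by linarith [Real.cos_le_one (NN p * θ)])) ?_
      ((VV_summable hd).mul_right 2)
    intro p
    exact mul_le_mul_of_nonneg_left (by linarith [Real.neg_one_le_cos (NN p * θ)]) (VV_nonneg d p)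
  have hr : ‖Real.exp (-d)‖ < 1 := by
    rw [Real.norm_of_nonneg (Real.exp_pos _).le]; simpa using hd
  have hx : ‖XX d θ‖ < 1 := by rw [XX_norm]; simpa using hd
  have g1 : HasSum (fun j : ℕ => Real.exp (-d) ^ j) (1 - Real.exp (-d))⁻¹ :=
    hasSum_geometric_of_norm_lt_one hr
  have g2 : HasSum (fun j : ℕ => (XX d θ ^ j).re) ((1 - XX d θ)⁻¹).re :=
    Complex.hasSum_re (hasSum_geometric_of_norm_lt_one hx)
  have g3 := g1.sub g2
  have g4 := (hasSum_nat_add_iff' 1).2 g3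
  simp only [Finset.range_one, Finset.sum_singleton, pow_zero, Complex.one_re, sub_self, sub_zero] at g4
  have hle : ∑' j : ℕ, (Real.exp (-d) ^ (j + 1) - (XX d θ ^ (j + 1)).re) ≤
      ∑' p, VV d p * (1 - Real.cos (NN p * θ)) := by
    refine Summable.tsum_le_tsum_of_inj (fun j : ℕ => ((j, 0) : ℕ × ℕ)) (fun a b h => by simpa using h)
      (fun p _ => mul_nonneg (VV_nonneg d p) (by linarith [Real.cos_le_one (NN p * θ)])) ?_
      g4.summable hs2
    intro j
    apply le_of_eq
    have := XX_pow_pow d θ (j, 0)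
    simp only [zero_add, pow_one] at this
    rw [this, Complex.re_ofReal_mul, EE, Complex.exp_ofReal_mul_I_re, VV, ← Real.exp_nat_mul]
    have e : ((j + 1 : ℕ) : ℝ) * (-d) = -(NN (j, 0) * d) := by simp [NN]
    rw [e]
    simp
    ring
  rw [hre, tsum_neg]
  rw [g4.tsum_eq] at hle
  rw [one_div]
  linarith

lemma S_formula {d : ℝ} (hd : 0 < d) (θ : ℝ) :
    1 / (1 - Real.exp (-d)) - ((1 - XX d θ)⁻¹).re =
    Real.exp (-d) * (1 - Real.cos θ) * (1 + Real.exp (-d)) /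
      ((1 - Real.exp (-d)) * ((1 - Real.exp (-d)) ^ 2 + 2 * (Real.exp (-d) * (1 - Real.cos θ)))) := by
  have h0 : 0 < 1 - Real.exp (-d) := by simpa using hd
  have hu : 0 ≤ 1 - Real.cos θ := by linarith [Real.cos_le_one θ]
  have hr := Real.exp_pos (-d)
  have hxre : (XX d θ).re = Real.exp (-d) * Real.cos θ := by
    rw [XX, Complex.exp_re]; simp
  have hxim : (XX d θ).im = Real.exp (-d) * Real.sin θ := by
    rw [XX, Complex.exp_im]; simp
  have hN : Complex.normSq (1 - XX d θ) = (1 - Real.exp (-d)) ^ 2 + 2 * (Real.exp (-d) * (1 - Real.cos θ)) := by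
    rw [Complex.normSq_apply]
    simp only [Complex.sub_re, Complex.sub_im, Complex.one_re, Complex.one_im, hxre, hxim]
    nlinarith [Real.sin_sq_add_cos_sq θ]
  have hpos : 0 < (1 - Real.exp (-d)) ^ 2 + 2 * (Real.exp (-d) * (1 - Real.cos θ)) := by positivity
  rw [Complex.inv_re, hN]
  simp only [Complex.sub_re, Complex.one_re, hxre]
  field_simp
  ring

lemma S_lower {d : ℝ} (hd : 0 < d) (hd1 : d ≤ 1) {θ : ℝ} (hθ : |θ| ≤ Real.pi) {c : ℝ} (hc0 : 0 < c)
    (hc : c * Real.pi ^ 2 * 3 ≤ 2) :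
    c * θ ^ 2 / (d * (d ^ 2 + 2 * (c * θ ^ 2))) ≤ 1 / (1 - Real.exp (-d)) - ((1 - XX d θ)⁻¹).re := by
  rw [S_formula hd]
  have h0 : 0 < 1 - Real.exp (-d) := by simpa using hd
  have hqd : 1 - Real.exp (-d) ≤ d := by linarith [Real.add_one_le_exp (-d)]
  have hr3 : 1 / 3 ≤ Real.exp (-d) := by
    have : Real.exp (-1) ≤ Real.exp (-d) := Real.exp_le_exp.2 (by linarith)
    have h3 : Real.exp (-1) > 0.36787944116 := Real.exp_neg_one_gt_d9
    norm_num at h3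
    linarith
  have hu : c * 3 * θ ^ 2 ≤ 1 - Real.cos θ := by
    have h1 := Real.cos_le_one_sub_mul_cos_sq hθ
    have h2 : c * 3 ≤ 2 / Real.pi ^ 2 := by
      rw [le_div_iff₀ (by positivity)]; linarith
    nlinarith [sq_nonneg θ]
  set r := Real.exp (-d)
  set u := 1 - Real.cos θ
  set q := 1 - r
  have hu0 : 0 ≤ u := le_trans (by positivity) hu
  have hv : c * θ ^ 2 ≤ r * u := by
    calc c * θ ^ 2 = 1 / 3 * (c * 3 * θ ^ 2) := by ring
      _ ≤ r * u := by gcongr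
  set v := c * θ ^ 2
  have hv0 : 0 ≤ v := by positivity
  set y := r * u
  have hy0 : 0 ≤ y := hv0.trans hv
  have hr0 : 0 < r := Real.exp_pos _
  calc v / (d * (d ^ 2 + 2 * v)) ≤ v / (q * (q ^ 2 + 2 * v)) := by gcongr
    _ ≤ y / (q * (q ^ 2 + 2 * y)) := by
        rw [div_le_div_iff₀ (by positivity) (by positivity)]
        have : v * q ^ 3 ≤ y * q ^ 3 := by gcongr
        nlinarith
    _ ≤ y * (1 + r) / (q * (q ^ 2 + 2 * y)) := by
        gcongr
        nlinarith

lemma Ex_dom : ∃ K : ℝ, 0 < K ∧ ∀ d w t : ℝ, 0 < d → d ≤ 1 → w ^ 2 = d ^ 3 → |t * w| ≤ Real.pi →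
    ‖Complex.exp (Ex d (t * w))‖ ≤ K * (1 + t ^ 2)⁻¹ := by
  set c : ℝ := 2 / (3 * Real.pi ^ 2) with hc
  have hc0 : 0 < c := by positivity
  have hc2 : c * Real.pi ^ 2 * 3 ≤ 2 := by
    apply le_of_eq; rw [hc]; field_simp
  refine ⟨1 + 2 / c + 6 * (64 * Real.pi ^ 2), by positivity, ?_⟩
  intro d w t hd hd1 hw ht
  have h1 := S_lower hd hd1 ht hc0 hc2
  have h2 := Ex_re_le hd (t * w)
  set S := 1 / (1 - Real.exp (-d)) - ((1 - XX d (t * w))⁻¹).re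
  have h3 : c * t ^ 2 / (1 + 2 * c * t ^ 2 * d) ≤ S := by
    refine le_trans (le_of_eq ?_) h1
    rw [mul_pow, hw]
    field_simp
  have ht2 : t ^ 2 * d ^ 3 ≤ Real.pi ^ 2 := by
    rw [← hw, ← mul_pow, ← sq_abs]; gcongr
  have hS0 : 0 ≤ S := le_trans (by positivity) h3
  rw [Complex.norm_exp]
  have h4 : Real.exp (Ex d (t * w)).re ≤ Real.exp (-S) := Real.exp_le_exp.2 h2
  refine h4.trans ?_
  rw [Real.exp_neg, ← div_eq_mul_inv, inv_eq_one_div, div_le_div_iff₀ (Real.exp_pos _) (by positivity), one_mul]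
  have e1 : 1 ≤ Real.exp S := Real.one_le_exp hS0
  have e2 : S ≤ Real.exp S := by linarith [Real.add_one_le_exp S]
  have e3 : S ^ 3 ≤ 6 * Real.exp S := by
    have := Real.pow_div_factorial_le_exp S hS0 3
    rw [div_le_iff₀ (by positivity)] at this
    simp [Nat.factorial] at this
    linarith
  have key : t ^ 2 ≤ (2 / c + 6 * (64 * Real.pi ^ 2)) * Real.exp S := by
    rcases le_or_gt (2 * c * t ^ 2 * d) 1 with h | h
    · have h5 : c * t ^ 2 / 2 ≤ S := by
        refine le_trans ?_ h3
        gcongr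
        linarith
      have h6 : t ^ 2 ≤ 2 / c * S := by
        rw [div_mul_eq_mul_div, le_div_iff₀ hc0]; linarith
      calc t ^ 2 ≤ 2 / c * Real.exp S := h6.trans (by gcongr)
        _ ≤ _ := by gcongr; linarith [show 0 < 6 * (64 * Real.pi ^ 2) by positivity]
    · have h5 : 1 / (4 * d) ≤ S := by
        refine le_trans ?_ h3
        rw [div_le_div_iff₀ (by positivity) (by positivity)]
        nlinarith
      have h6 : (1 / (4 * d)) ^ 3 ≤ S ^ 3 := by gcongr
      have h7 : t ^ 2 ≤ 64 * Real.pi ^ 2 * (1 / (4 * d)) ^ 3 := by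
        have : 64 * Real.pi ^ 2 * (1 / (4 * d)) ^ 3 = Real.pi ^ 2 / d ^ 3 := by field_simp; norm_num
        rw [this, le_div_iff₀ (by positivity)]; exact ht2
      calc t ^ 2 ≤ 64 * Real.pi ^ 2 * (6 * Real.exp S) := h7.trans (by gcongr; exact h6.trans e3)
        _ = (6 * (64 * Real.pi ^ 2)) * Real.exp S := by ring
        _ ≤ _ := by gcongr; linarith [show 0 < 2 / c by positivity]
  nlinarith

open PowerSeries in
open scoped PowerSeries.WithPiTopology in
/-- Formal geometric series `Σ_j X^{(i+1)j}`. -/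
noncomputable def geo (i : ℕ) : PowerSeries ℂ := ∑' j : ℕ, (X : PowerSeries ℂ) ^ ((i + 1) * j)

open PowerSeries in
open scoped PowerSeries.WithPiTopology in
lemma coeff_prod_tendsto (n : ℕ) :
    Tendsto (fun M : ℕ => coeff n (∏ i ∈ Finset.range M, geo i)) atTop
      (𝓝 (Fintype.card (Nat.Partition n) : ℂ)) := by
  have h := Nat.Partition.hasProd_powerSeriesMk_card_restricted ℂ (fun _ => True)
  have h2 := h.tendsto_prod_nat
  rw [WithPiTopology.tendsto_iff_coeff_tendsto] at h2
  have h3 := h2 n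
  simp only [if_true, coeff_mk] at h3
  have hc : (Nat.Partition.restricted n (fun _ => True)).card = Fintype.card (Nat.Partition n) := by
    rw [← Finset.card_univ]; congr 1; ext p; simp [Nat.Partition.restricted]
  rw [hc] at h3
  exact h3

open PowerSeries in
open scoped PowerSeries.WithPiTopology in
lemma coeff_geo (i n : ℕ) : coeff n (geo i) = if (i + 1) ∣ n then 1 else 0 := by
  have hs : Summable (fun j : ℕ => (X : PowerSeries ℂ) ^ ((i + 1) * j)) := by
    apply WithPiTopology.summable_of_tendsto_order_atTop_nhds_top
    refine ENat.tendsto_nhds_top_iff_natCast_lt.mpr (fun n ↦ Filter.eventually_atTop.mpr ⟨n + 1, ?_⟩)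
    intro m hm
    rw [order_X_pow]
    norm_cast
    nlinarith
  rw [geo, hs.map_tsum _ (WithPiTopology.continuous_coeff _ _)]
  simp only [coeff_X_pow]
  split_ifs with h
  · obtain ⟨k, rfl⟩ := h
    rw [tsum_eq_single k]
    · simp
    · intro b hb
      rw [if_neg]
      intro h
      exact hb (Nat.eq_of_mul_eq_mul_left (by omega) h).symm
  · convert tsum_zero with b
    rw [if_neg]
    rintro rfl
    exact h ⟨b, rfl⟩

lemma geo_hasSum (i : ℕ) {x : ℂ} (hx : ‖x‖ < 1) :
    Summable (fun n => ‖PowerSeries.coeff n (geo i) * x ^ n‖) ∧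
    ∑' n, PowerSeries.coeff n (geo i) * x ^ n = (1 - x ^ (i + 1))⁻¹ := by
  constructor
  · refine Summable.of_nonneg_of_le (fun n => norm_nonneg _) ?_ (summable_geometric_of_lt_one (norm_nonneg x) hx)
    intro n
    rw [coeff_geo, norm_mul, norm_pow]
    split_ifs <;> simp
  · have hx2 : ‖x ^ (i + 1)‖ < 1 := by
      rw [norm_pow]; exact pow_lt_one₀ (norm_nonneg _) hx (by omega)
    rw [← tsum_geometric_of_norm_lt_one hx2]
    have hinj : Function.Injective (fun k : ℕ => (i + 1) * k) := fun a b h =>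
      Nat.eq_of_mul_eq_mul_left (by omega) h
    rw [← hinj.tsum_eq]
    · refine tsum_congr fun k => ?_
      simp [coeff_geo, pow_mul]
    · intro n hn
      rw [Function.mem_support, coeff_geo] at hn
      by_cases h : (i + 1) ∣ n
      · obtain ⟨k, rfl⟩ := h; exact ⟨k, rfl⟩
      · simp [h] at hn

lemma cauchy_aux (A B : ℕ → ℂ) (hA : Summable (fun n => ‖A n‖)) (hB : Summable (fun n => ‖B n‖)) :
    Summable (fun n => ‖∑ kl ∈ Finset.HasAntidiagonal.antidiagonal n, A kl.1 * B kl.2‖) ∧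
    ∑' n, ∑ kl ∈ Finset.HasAntidiagonal.antidiagonal n, A kl.1 * B kl.2 = (∑' n, A n) * ∑' n, B n :=
  ⟨summable_norm_sum_mul_antidiagonal_of_summable_norm hA hB,
    (tsum_mul_tsum_eq_tsum_sum_antidiagonal_of_summable_norm hA hB).symm⟩

lemma prod_geo_hasSum (M : ℕ) {x : ℂ} (hx : ‖x‖ < 1) :
    Summable (fun n => ‖PowerSeries.coeff n (∏ i ∈ Finset.range M, geo i) * x ^ n‖) ∧
    ∑' n, PowerSeries.coeff n (∏ i ∈ Finset.range M, geo i) * x ^ n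
      = ∏ i ∈ Finset.range M, (1 - x ^ (i + 1))⁻¹ := by
  induction M with
  | zero =>
    have : ∀ n, PowerSeries.coeff n (1 : PowerSeries ℂ) * x ^ n = if n = 0 then 1 else 0 := by
      intro n; rw [PowerSeries.coeff_one]; split_ifs with h <;> simp [h]
    simp only [Finset.range_zero, Finset.prod_empty, this]
    refine ⟨summable_of_ne_finset_zero (s := {0}) ?_, by simp⟩
    intro b hb
    simp at hb
    simp [hb]
  | succ M ih =>
    have hg := geo_hasSum M hx
    have e : ∀ n, PowerSeries.coeff n (∏ i ∈ Finset.range (M + 1), geo i) * x ^ n =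
        ∑ kl ∈ Finset.HasAntidiagonal.antidiagonal n,
          (PowerSeries.coeff kl.1 (∏ i ∈ Finset.range M, geo i) * x ^ kl.1) *
          (PowerSeries.coeff kl.2 (geo M) * x ^ kl.2) := by
      intro n
      rw [Finset.prod_range_succ, PowerSeries.coeff_mul, Finset.sum_mul]
      refine Finset.sum_congr rfl fun kl hkl => ?_
      rw [Finset.HasAntidiagonal.mem_antidiagonal] at hkl
      rw [← hkl, pow_add]; ring
    obtain ⟨ih1, ih2⟩ := ih
    obtain ⟨hg1, hg2⟩ := hg
    have hP : ∏ i ∈ Finset.range (M + 1), (1 - x ^ (i + 1))⁻¹ =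
      (∏ i ∈ Finset.range M, (1 - x ^ (i + 1))⁻¹) * (1 - x ^ (M + 1))⁻¹ := Finset.prod_range_succ _ _
    rw [hP, ← ih2, ← hg2]
    simp only [e]
    exact cauchy_aux (fun n => PowerSeries.coeff n (∏ i ∈ Finset.range M, geo i) * x ^ n)
      (fun n => PowerSeries.coeff n (geo M) * x ^ n) ih1 hg1

lemma phase_integral (k : ℤ) :
    ∫ θ in (-Real.pi)..Real.pi, Complex.exp (k * θ * Complex.I) = if k = 0 then (2 * Real.pi : ℂ) else 0 := by
  split_ifs with h
  · subst h
    simp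
    ring
  · have hk : (k * Complex.I : ℂ) ≠ 0 := mul_ne_zero (by exact_mod_cast h) Complex.I_ne_zero
    have e : ∀ θ : ℝ, Complex.exp (k * θ * Complex.I) = Complex.exp ((k * Complex.I) * θ) := by
      intro θ; congr 1; ring
    simp only [e]
    rw [integral_exp_mul_complex hk, div_eq_zero_iff]
    left
    rw [sub_eq_zero, Complex.exp_eq_exp_iff_exists_int]
    exact ⟨k, by push_cast; ring⟩

lemma XX_pow_eq (d θ : ℝ) (n : ℕ) : XX d θ ^ n = (Real.exp (-d) : ℂ) ^ n * Complex.exp (n * θ * Complex.I) := by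
  rw [XX, Complex.exp_add, mul_pow, Complex.ofReal_exp, ← Complex.exp_nat_mul (θ * Complex.I)]
  congr 2
  · push_cast; rfl
  · ring

lemma prod_integral {d : ℝ} (hd : 0 < d) (M n : ℕ) :
    ∫ θ in (-Real.pi)..Real.pi, (∏ i ∈ Finset.range M, (1 - XX d θ ^ (i + 1))⁻¹) *
      Complex.exp (-(θ * n) * Complex.I) =
    2 * Real.pi * (Real.exp (-d) : ℂ) ^ n * PowerSeries.coeff n (∏ i ∈ Finset.range M, geo i) := by
  set a : ℕ → ℂ := fun k => PowerSeries.coeff k (∏ i ∈ Finset.range M, geo i) with ha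
  set r : ℂ := (Real.exp (-d) : ℂ) with hr
  have hrn : ‖r‖ < 1 := by
    rw [hr, Complex.norm_real, Real.norm_of_nonneg (Real.exp_pos _).le]; simpa using hd
  have hsr := (prod_geo_hasSum M hrn).1
  have hterm : ∀ (k : ℕ) (θ : ℝ), ‖a k * XX d θ ^ k * Complex.exp (-(θ * n) * Complex.I)‖ = ‖a k * r ^ k‖ := by
    intro k θ
    have h1 : ‖Complex.exp (-(θ * n) * Complex.I)‖ = 1 := by
      have : (-(θ * n) * Complex.I : ℂ) = ((-(θ * n) : ℝ) : ℂ) * Complex.I := by push_cast; ring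
      rw [this, Complex.norm_exp_ofReal_mul_I]
    rw [norm_mul, h1, mul_one, norm_mul, norm_mul, norm_pow, norm_pow, XX_norm, hr, Complex.norm_real,
      Real.norm_of_nonneg (Real.exp_pos _).le]
  have hXc : Continuous (fun θ : ℝ => XX d θ) := by unfold XX; fun_prop
  have key : HasSum (fun k : ℕ => ∫ θ in (-Real.pi)..Real.pi, a k * XX d θ ^ k * Complex.exp (-(θ * n) * Complex.I))
      (∫ θ in (-Real.pi)..Real.pi, (∏ i ∈ Finset.range M, (1 - XX d θ ^ (i + 1))⁻¹) *
      Complex.exp (-(θ * n) * Complex.I)) := by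
    refine intervalIntegral.hasSum_integral_of_dominated_convergence (fun k _ => ‖a k * r ^ k‖) ?_ ?_ ?_ ?_ ?_
    · intro k
      apply Continuous.aestronglyMeasurable
      fun_prop
    · intro k
      exact Eventually.of_forall fun θ _ => (hterm k θ).le
    · exact Eventually.of_forall fun θ _ => hsr
    · exact intervalIntegrable_const
    · refine Eventually.of_forall fun θ _ => ?_
      have hx : ‖XX d θ‖ < 1 := by rw [XX_norm]; simpa using hd
      have := prod_geo_hasSum M hx
      rw [← this.2]
      exact (this.1.of_norm.hasSum).mul_right _
  rw [← key.tsum_eq]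
  have e : ∀ k : ℕ, ∫ θ in (-Real.pi)..Real.pi, a k * XX d θ ^ k * Complex.exp (-(θ * n) * Complex.I)
      = if k = n then 2 * Real.pi * r ^ n * a n else 0 := by
    intro k
    have : ∀ θ : ℝ, a k * XX d θ ^ k * Complex.exp (-(θ * n) * Complex.I) =
        (a k * r ^ k) * Complex.exp (((k - n : ℤ) : ℂ) * θ * Complex.I) := by
      intro θ
      rw [XX_pow_eq, ← hr, ← mul_assoc, mul_assoc, ← Complex.exp_add]
      congr 2; push_cast; ring
    simp only [this]
    rw [intervalIntegral.integral_const_mul, phase_integral]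
    by_cases h : k = n
    · subst h; simp; ring
    · rw [if_neg (by omega), if_neg h, mul_zero]
  simp only [e]
  rw [tsum_ite_eq]

lemma cauchy {d : ℝ} (hd : 0 < d) (n : ℕ) :
    ∫ θ in (-Real.pi)..Real.pi, gC (XX d θ) * Complex.exp (-(θ * n) * Complex.I) =
    2 * Real.pi * (Real.exp (-d) : ℂ) ^ n * (Fintype.card (Nat.Partition n) : ℂ) := by
  have ht : ∀ θ, Tendsto (fun M => ∏ i ∈ Finset.range M, (1 - XX d θ ^ (i + 1))⁻¹) atTop (𝓝 (gC (XX d θ))) :=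
    fun θ => (gC_tendsto hd θ).1.hasProd.tendsto_prod_nat
  obtain ⟨C, hC⟩ := (Metric.isBounded_range_of_tendsto _ (ht 0)).exists_norm_le
  have hXc : Continuous (fun θ : ℝ => XX d θ) := by unfold XX; fun_prop
  have hne : ∀ (θ : ℝ) (j : ℕ), 1 - XX d θ ^ (j + 1) ≠ 0 := by
    intro θ j
    have hn := XX_pow_norm_lt hd θ j
    refine (sub_ne_zero.2 ?_)
    intro h; rw [← h] at hn; simp at hn
  have h1 : Tendsto (fun M => ∫ θ in (-Real.pi)..Real.pi, (∏ i ∈ Finset.range M, (1 - XX d θ ^ (i + 1))⁻¹) *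
      Complex.exp (-(θ * n) * Complex.I)) atTop
      (𝓝 (∫ θ in (-Real.pi)..Real.pi, gC (XX d θ) * Complex.exp (-(θ * n) * Complex.I))) := by
    refine intervalIntegral.tendsto_integral_filter_of_dominated_convergence (fun _ => C) ?_ ?_ ?_ ?_
    · refine Eventually.of_forall fun M => ?_
      apply Continuous.aestronglyMeasurable
      refine Continuous.mul (continuous_finsetProd _ fun i _ => ?_) (by fun_prop)
      exact Continuous.inv₀ (by fun_prop) (fun θ => hne θ i)
    · refine Eventually.of_forall fun M => Eventually.of_forall fun θ _ => ?_
      have h1 : ‖Complex.exp (-(θ * n) * Complex.I)‖ = 1 := by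
        have : (-(θ * n) * Complex.I : ℂ) = ((-(θ * n) : ℝ) : ℂ) * Complex.I := by push_cast; ring
        rw [this, Complex.norm_exp_ofReal_mul_I]
      rw [norm_mul, h1, mul_one]
      refine le_trans ?_ (hC _ ⟨M, rfl⟩)
      rw [norm_prod, norm_prod]
      refine Finset.prod_le_prod (fun i _ => norm_nonneg _) fun i _ => ?_
      rw [norm_inv, norm_inv]
      have hx0 : XX d 0 ^ (i + 1) = ((Real.exp (-d) ^ (i + 1) : ℝ) : ℂ) := by
        simp [XX]
      have hlt : Real.exp (-d) ^ (i + 1) < 1 :=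
        pow_lt_one₀ (Real.exp_pos _).le (by simpa using hd) (by omega)
      have e2 : ‖1 - XX d 0 ^ (i + 1)‖ = 1 - Real.exp (-d) ^ (i + 1) := by
        rw [hx0, ← Complex.ofReal_one, ← Complex.ofReal_sub, Complex.norm_real, Real.norm_of_nonneg (by linarith)]
      rw [e2]
      have e3 : 1 - Real.exp (-d) ^ (i + 1) ≤ ‖1 - XX d θ ^ (i + 1)‖ := by
        have := norm_sub_norm_le (1 : ℂ) (XX d θ ^ (i + 1))
        rw [norm_one, norm_pow, XX_norm] at this
        exact this
      exact inv_anti₀ (by linarith) e3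
    · exact intervalIntegrable_const
    · exact Eventually.of_forall fun θ _ => (ht θ).mul_const _
  have h2 := (coeff_prod_tendsto n).const_mul (2 * Real.pi * (Real.exp (-d) : ℂ) ^ n)
  simp only [prod_integral hd] at h1
  exact tendsto_nhds_unique h1 h2

/-- `ζ(2)`. -/
noncomputable def Z2 : ℝ := ∑' k : ℕ, (1 : ℝ) / (k + 1) ^ (1 + 1)

lemma Z2_eq : Z2 = Real.pi ^ 2 / 6 := by
  have h := (hasSum_nat_add_iff' 1).2 hasSum_zeta_two
  simp at h
  rw [Z2, ← h.tsum_eq]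
  refine tsum_congr fun k => ?_
  simp

lemma Z2_pos : 0 < Z2 := by rw [Z2_eq]; positivity

lemma GG_anti (m b : ℕ) {d e : ℝ} (hd : 0 < d) (hde : d ≤ e) : GG m b e ≤ GG m b d := by
  refine Summable.tsum_le_tsum ?_ (WW_summable m b (hd.trans_le hde)) (WW_summable m b hd)
  intro p
  have := NN_pos p
  unfold WW
  gcongr

lemma d_tendsto (d : ℕ → ℝ) (hd : ∀ n : ℕ, 0 < n → 0 < d n ∧ aFun (d n) = n) :
    Tendsto d atTop (𝓝[>] 0) := by
  refine tendsto_nhdsWithin_iff.2 ⟨?_, ?_⟩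
  · rw [Metric.tendsto_atTop]
    intro ε hε
    obtain ⟨N, hN⟩ := exists_nat_gt (GG 1 0 ε)
    refine ⟨N + 1, fun n hn => ?_⟩
    obtain ⟨h1, h2⟩ := hd n (by omega)
    rw [Real.dist_eq, sub_zero, abs_of_pos h1]
    by_contra hcon
    push Not at hcon
    have h3 := GG_anti 1 0 hε hcon
    rw [← aFun_eq h1, h2] at h3
    have : (N : ℝ) ≤ n := by exact_mod_cast (by omega : N ≤ n)
    linarith
  · filter_upwards [eventually_gt_atTop 0] with n hn
    exact (hd n hn).1

lemma nd2_tendsto (d : ℕ → ℝ) (hd : ∀ n : ℕ, 0 < n → 0 < d n ∧ aFun (d n) = n) :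
    Tendsto (fun n : ℕ => (n : ℝ) * d n ^ 2) atTop (𝓝 Z2) := by
  have h := (GG_tendsto 1 0 le_rfl).comp (d_tendsto d hd)
  simp only [Nat.factorial, Function.comp_def] at h
  norm_num at h
  have e : (∑' k : ℕ, ((((k : ℝ) + 1) ^ 2)⁻¹)) = Z2 := by simp [Z2]
  rw [e] at h
  refine h.congr' ?_
  filter_upwards [eventually_gt_atTop 0] with n hn
  rw [← aFun_eq (hd n hn).1, (hd n hn).2]
  ring

lemma main_tendsto_one (m : ℕ) (d : ℕ → ℝ) (hd : ∀ n : ℕ, 0 < n → 0 < d n ∧ aFun (d n) = n) :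
    Tendsto (fun n : ℕ => (6 * n / Real.pi ^ 2) ^ (((m : ℝ) + 1) / 2) * d n ^ (m + 1)) atTop (𝓝 1) := by
  have h := (nd2_tendsto d hd).const_mul (6 / Real.pi ^ 2)
  have e : 6 / Real.pi ^ 2 * Z2 = 1 := by rw [Z2_eq]; field_simp
  rw [e] at h
  have h2 := h.rpow_const (p := ((m : ℝ) + 1) / 2) (Or.inl one_ne_zero)
  rw [Real.one_rpow] at h2
  refine h2.congr' ?_
  filter_upwards [eventually_gt_atTop 0] with n hn
  have h1 := (hd n hn).1
  rw [← mul_assoc, Real.mul_rpow (by positivity) (by positivity)]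
  congr 1
  · congr 1; ring
  · rw [← Real.rpow_natCast (d n) 2, ← Real.rpow_mul h1.le, ← Real.rpow_natCast]
    congr 1; push_cast; ring

lemma log_window (d : ℕ → ℝ) (hd : ∀ n : ℕ, 0 < n → 0 < d n ∧ aFun (d n) = n) :
    Tendsto (fun n : ℕ => Real.log n * d n ^ ((1 : ℝ) / 6)) atTop (𝓝 0) := by
  have h := (nd2_tendsto d hd).rpow_const (p := (1 : ℝ) / 12) (Or.inl Z2_pos.ne')
  have h1 : Tendsto (fun n : ℕ => Real.log n / (n : ℝ) ^ ((1 : ℝ) / 12)) atTop (𝓝 0) :=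
    (isLittleO_log_rpow_atTop (by norm_num : (0 : ℝ) < 1 / 12)).tendsto_div_nhds_zero.comp
      tendsto_natCast_atTop_atTop
  have h2 := h1.mul h
  rw [zero_mul] at h2
  refine h2.congr' ?_
  filter_upwards [eventually_gt_atTop 0] with n hn
  have hp := (hd n hn).1
  have hn' : (0 : ℝ) < n := by exact_mod_cast hn
  rw [Real.mul_rpow hn'.le (by positivity), ← Real.rpow_natCast (d n) 2, ← Real.rpow_mul hp.le]
  have : (n : ℝ) ^ ((1 : ℝ) / 12) ≠ 0 := by positivity
  field_simp
  norm_num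

/-- Gaussian scale `d^{3/2}`. -/
noncomputable def ww (d : ℝ) : ℝ := d ^ ((3 : ℝ) / 2)

lemma ww_pos {d : ℝ} (hd : 0 < d) : 0 < ww d := by unfold ww; positivity

lemma ww_sq {d : ℝ} (hd : 0 < d) : ww d ^ 2 = d ^ 3 := by
  rw [ww, ← Real.rpow_natCast, ← Real.rpow_mul hd.le, ← Real.rpow_natCast]; norm_num

lemma ww_eq {d : ℝ} (hd : 0 < d) : ww d = d * d ^ ((1 : ℝ) / 2) := by
  rw [ww]
  nth_rewrite 2 [← Real.rpow_one d]
  rw [← Real.rpow_add hd]; norm_num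

lemma sqrt_tendsto : Tendsto (fun d : ℝ => d ^ ((1 : ℝ) / 2)) (𝓝[>] 0) (𝓝 0) := by
  have : Tendsto (fun d : ℝ => d ^ ((1 : ℝ) / 2)) (𝓝 0) (𝓝 ((0 : ℝ) ^ ((1 : ℝ) / 2))) :=
    (Real.continuous_rpow_const (by norm_num)).tendsto 0
  rw [Real.zero_rpow (by norm_num)] at this
  exact this.mono_left nhdsWithin_le_nhds

lemma Ex_tendsto (t : ℝ) :
    Tendsto (fun d : ℝ => Complex.exp (Ex d (t * ww d))) (𝓝[>] 0)
      (𝓝 ((Real.exp (-Z2 * t ^ 2) : ℝ) : ℂ)) := by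
  have h11 := GG_tendsto 1 1 le_rfl
  have h12 := GG_tendsto 1 2 le_rfl
  have hA : Tendsto (fun d : ℝ => (t * ww d) ^ 2 / 2 * GG 1 1 d) (𝓝[>] 0) (𝓝 (Z2 * t ^ 2)) := by
    have := h11.const_mul (t ^ 2 / 2)
    have e : t ^ 2 / 2 * (((1 + 1).factorial : ℕ) * Z2) = Z2 * t ^ 2 := by
      simp [Nat.factorial]; ring
    rw [← Z2, e] at this
    refine this.congr' ?_
    filter_upwards [self_mem_nhdsWithin] with d hd
    rw [mul_pow, ww_sq hd]; ring
  have hB : Tendsto (fun d : ℝ => 4 * |t * ww d| ^ 3 * GG 1 2 d) (𝓝[>] 0) (𝓝 0) := by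
    have := (sqrt_tendsto.mul h12).const_mul (4 * |t| ^ 3)
    rw [zero_mul, mul_zero] at this
    refine this.congr' ?_
    filter_upwards [self_mem_nhdsWithin] with d hd
    have hd : 0 < d := hd
    rw [abs_mul, abs_of_pos (ww_pos hd), mul_pow, pow_succ (ww d) 2, ww_sq hd, ww_eq hd]
    ring
  have hC : Tendsto (fun d : ℝ => Ex d (t * ww d) + (((t * ww d) ^ 2 / 2 * GG 1 1 d : ℝ) : ℂ)) (𝓝[>] 0) (𝓝 0) := by
    refine squeeze_zero_norm' ?_ hB
    filter_upwards [self_mem_nhdsWithin] with d hd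
    exact Ex_approx hd _
  have hA' : Tendsto (fun d : ℝ => (((t * ww d) ^ 2 / 2 * GG 1 1 d : ℝ) : ℂ)) (𝓝[>] 0) (𝓝 ((Z2 * t ^ 2 : ℝ) : ℂ)) :=
    (Complex.continuous_ofReal.tendsto _).comp hA
  have hD := hC.sub hA'
  have hE := (Complex.continuous_exp.tendsto _).comp hD
  have e : Complex.exp (0 - ((Z2 * t ^ 2 : ℝ) : ℂ)) = ((Real.exp (-Z2 * t ^ 2) : ℝ) : ℂ) := by
    rw [Complex.ofReal_exp]; congr 1; push_cast; ring
  rw [e] at hE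
  refine hE.congr fun d => ?_
  simp only [Function.comp_apply]
  congr 1; ring

lemma FC_tendsto (m : ℕ) (hm : 1 ≤ m) (t : ℝ) :
    Tendsto (fun d : ℝ => ((d ^ (m + 1) : ℝ) : ℂ) * FC m (XX d (t * ww d))) (𝓝[>] 0)
      (𝓝 ((m.factorial * ∑' k : ℕ, (1 : ℝ) / (k + 1) ^ (m + 1) : ℝ) : ℂ)) := by
  have h0 := GG_tendsto m 0 hm
  have h1 := GG_tendsto m 1 hm
  have hA : Tendsto (fun d : ℝ => ((d ^ (m + 1) * GG m 0 d : ℝ) : ℂ)) (𝓝[>] 0)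
      (𝓝 ((m.factorial * ∑' k : ℕ, (1 : ℝ) / (k + 1) ^ (m + 1) : ℝ) : ℂ)) :=
    (Complex.continuous_ofReal.tendsto _).comp h0
  have hB : Tendsto (fun d : ℝ => d ^ (m + 1) * (|t * ww d| * GG m 1 d)) (𝓝[>] 0) (𝓝 0) := by
    have := (sqrt_tendsto.mul h1).const_mul |t|
    rw [zero_mul, mul_zero] at this
    refine this.congr' ?_
    filter_upwards [self_mem_nhdsWithin] with d hd
    have hd : 0 < d := hd
    rw [abs_mul, abs_of_pos (ww_pos hd), ww_eq hd]
    ring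
  have hC : Tendsto (fun d : ℝ => ((d ^ (m + 1) : ℝ) : ℂ) * (FC m (XX d (t * ww d)) - (GG m 0 d : ℂ))) (𝓝[>] 0) (𝓝 0) := by
    refine squeeze_zero_norm' ?_ hB
    filter_upwards [self_mem_nhdsWithin] with d hd
    have hd : 0 < d := hd
    rw [norm_mul, Complex.norm_real, Real.norm_of_nonneg (by positivity)]
    gcongr
    exact FC_sub_le m hd _
  have hD := hC.add hA
  rw [zero_add] at hD
  refine hD.congr fun d => ?_
  push_cast; ring

/-- The Gaussian integral in the limit. -/
noncomputable def II : ℂ := ∫ t : ℝ, ((Real.exp (-Z2 * t ^ 2) : ℝ) : ℂ)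

lemma II_ne : II ≠ 0 := by
  rw [II, integral_complex_ofReal, integral_gaussian]
  have := Z2_pos
  have h : 0 < Real.sqrt (Real.pi / Z2) := Real.sqrt_pos.2 (by positivity)
  exact_mod_cast h.ne'

lemma central (d : ℕ → ℝ) (hd : ∀ n : ℕ, 0 < n → 0 < d n ∧ aFun (d n) = n) (η : ℕ → ℝ)
    (hη : ∀ᶠ n in atTop, η n ≤ Real.pi) (hη2 : ∀ t : ℝ, ∀ᶠ n in atTop, |t * ww (d n)| ≤ η n)
    (f : ℕ → ℝ → ℂ) (hfc : ∀ᶠ n in atTop, Continuous (f n)) (B : ℝ)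
    (hB : ∀ᶠ n in atTop, ∀ θ, ‖f n θ‖ ≤ B) (l : ℂ)
    (hl : ∀ t : ℝ, Tendsto (fun n => f n (t * ww (d n))) atTop (𝓝 l)) :
    ∃ A : ℕ → ℂ, Tendsto A atTop (𝓝 (l * II)) ∧ ∀ᶠ n : ℕ in atTop,
      ∫ θ in Set.Icc (-(η n)) (η n), gC (XX (d n) θ) * f n θ * Complex.exp (-(θ * n) * Complex.I)
        = gC (XX (d n) 0) * ww (d n) * A n := by
  obtain ⟨K, hK0, hK⟩ := Ex_dom
  have hd0 := d_tendsto d hd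
  have hd1 : ∀ᶠ n in atTop, d n ≤ 1 := by
    have h := (tendsto_nhdsWithin_iff.1 hd0).1
    exact (h.eventually (eventually_lt_nhds (show (0 : ℝ) < 1 by norm_num))).mono fun n h => h.le
  set h : ℕ → ℝ → ℂ := fun n θ =>
    gC (XX (d n) θ) * f n θ * Complex.exp (-(θ * n) * Complex.I) / gC (XX (d n) 0) with hh
  have hg0 : ∀ n : ℕ, 0 < n → gC (XX (d n) 0) ≠ 0 := by
    intro n hn
    rw [gC_eq (hd n hn).1]; exact Complex.exp_ne_zero _
  have hhE : ∀ n : ℕ, 0 < n → ∀ θ, h n θ = Complex.exp (Ex (d n) θ) * f n θ := by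
    intro n hn θ
    have := gC_centered (hd n hn).1 θ n (hd n hn).2
    simp only [hh]
    rw [div_eq_iff (hg0 n hn), mul_right_comm, this]; ring
  refine ⟨fun n => ∫ t : ℝ, (Set.Icc (-(η n)) (η n)).indicator (h n) (t * ww (d n)), ?_, ?_⟩
  · have e : l * II = ∫ t : ℝ, ((Real.exp (-Z2 * t ^ 2) : ℝ) : ℂ) * l := by
      rw [MeasureTheory.integral_mul_const, II, mul_comm]
    rw [e]
    refine MeasureTheory.tendsto_integral_filter_of_dominated_convergence
      (fun t => K * (1 + t ^ 2)⁻¹ * B) ?_ ?_ ?_ ?_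
    · filter_upwards [hfc, eventually_gt_atTop 0] with n hc hn
      have hp := (hd n hn).1
      have hcont : Continuous (h n) := by
        simp only [hh]
        refine Continuous.div_const (((gC_cont hp).mul hc).mul (by fun_prop)) _
      have hm : Measurable ((Set.Icc (-(η n)) (η n)).indicator (h n)) :=
        hcont.measurable.indicator measurableSet_Icc
      exact (hm.comp (measurable_id.mul_const _)).aestronglyMeasurable
    · filter_upwards [hη, hB, hd1, eventually_gt_atTop 0] with n h1 h2 h3 hn
      refine Eventually.of_forall fun t => ?_
      have hp := (hd n hn).1
      have hB0 : 0 ≤ B := (norm_nonneg _).trans (h2 0)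
      by_cases hmem : t * ww (d n) ∈ Set.Icc (-(η n)) (η n)
      · rw [Set.indicator_of_mem hmem, hhE n hn, norm_mul]
        have := hK (d n) (ww (d n)) t hp h3 (ww_sq hp) ((abs_le.2 hmem).trans h1)
        gcongr
        exact h2 _
      · rw [Set.indicator_of_notMem hmem, norm_zero]; positivity
    · exact (integrable_inv_one_add_sq.const_mul K).mul_const B
    · refine Eventually.of_forall fun t => ?_
      have h1 := ((Ex_tendsto t).comp hd0).mul (hl t)
      refine h1.congr' ?_
      filter_upwards [hη2 t, eventually_gt_atTop 0] with n h2 hn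
      have hmem : t * ww (d n) ∈ Set.Icc (-(η n)) (η n) := abs_le.1 h2
      rw [Set.indicator_of_mem hmem, hhE n hn]
      rfl
  · filter_upwards [eventually_gt_atTop 0] with n hn
    have hp := (hd n hn).1
    have hw := ww_pos hp
    have h1 := MeasureTheory.Measure.integral_comp_mul_right
      (fun θ => (Set.Icc (-(η n)) (η n)).indicator (h n) θ) (ww (d n))
    rw [h1, MeasureTheory.integral_indicator measurableSet_Icc, abs_of_pos (inv_pos.2 hw)]
    simp only [hh]
    rw [MeasureTheory.integral_div, Complex.real_smul]
    have hw' : (ww (d n) : ℂ) ≠ 0 := by exact_mod_cast hw.ne'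
    have := hg0 n hn
    generalize (∫ θ in Set.Icc (-(η n)) (η n),
      gC (XX (d n) θ) * f n θ * Complex.exp (-(θ * n) * Complex.I)) = J
    push_cast
    field_simp

/-- **Asymptotics of the central integral** (formula (33) of the paper): for fixed `m ≥ 1`,
with `d_n` solving `Σ_{j≥1} j·e^{−jd}/(1 − e^{−jd}) = n` and `δ_n = d_n^{4/3}/log n`,
`J₁(m,n) = (e^{n d_n}/(2π))·∫_{−δ_n}^{δ_n} g(e^{−d_n+iθ})·F_m(e^{−d_n+iθ})·e^{−iθn} dθ`
satisfies `J₁(m,n) ∼ p(n)·(n/ζ(2))^{(m+1)/2}·m!·ζ(m+1)` as `n → ∞`, with `ζ(2) = π²/6`. -/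
theorem central_integral_asymptotics (m : ℕ) (hm : 1 ≤ m) (d : ℕ → ℝ)
    (hd : ∀ n : ℕ, 0 < n → 0 < d n ∧ aFun (d n) = n) :
    Asymptotics.IsEquivalent atTop
      (fun n : ℕ =>
        ((Real.exp (n * d n) / (2 * Real.pi) : ℝ) : ℂ) *
          ∫ θ in
            Set.Icc (-(d n ^ ((4 : ℝ) / 3) / Real.log n)) (d n ^ ((4 : ℝ) / 3) / Real.log n),
            gC (Complex.exp (-(d n : ℂ) + θ * Complex.I)) *
              FC m (Complex.exp (-(d n : ℂ) + θ * Complex.I)) *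
              Complex.exp (-(θ * n) * Complex.I))
      (fun n : ℕ =>
        (((Fintype.card (Nat.Partition n) : ℝ) *
            (6 * n / Real.pi ^ 2) ^ (((m : ℝ) + 1) / 2) *
            (m.factorial : ℝ) * ∑' j : ℕ, (1 : ℝ) / (j + 1) ^ (m + 1) : ℝ) : ℂ)) := by
  have hd0 := d_tendsto d hd
  have hd0' := (tendsto_nhdsWithin_iff.1 hd0).1
  have hd1 : ∀ᶠ n in atTop, d n ≤ 1 :=
    (hd0'.eventually (eventually_lt_nhds (show (0 : ℝ) < 1 by norm_num))).mono fun n h => h.le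
  have hlog : ∀ᶠ n : ℕ in atTop, 1 ≤ Real.log n :=
    (Real.tendsto_log_atTop.comp tendsto_natCast_atTop_atTop).eventually_ge_atTop 1
  -- the full circle
  have hww : Tendsto (fun n => ww (d n)) atTop (𝓝 0) := by
    have h1 : Tendsto (fun x : ℝ => x ^ ((3 : ℝ) / 2)) (𝓝 0) (𝓝 ((0 : ℝ) ^ ((3 : ℝ) / 2))) :=
      (Real.continuous_rpow_const (by norm_num)).tendsto 0
    rw [Real.zero_rpow (by norm_num)] at h1
    exact h1.comp hd0'
  obtain ⟨A1, hA1, hE1⟩ := central d hd (fun _ => Real.pi) (Eventually.of_forall fun _ => le_rfl)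
    (by
      intro t
      have h1 : Tendsto (fun n => |t * ww (d n)|) atTop (𝓝 0) := by
        simpa using (hww.const_mul t).abs
      exact (h1.eventually (eventually_lt_nhds Real.pi_pos)).mono fun n h => h.le)
    (fun _ _ => 1) (Eventually.of_forall fun _ => continuous_const) 1
    (Eventually.of_forall fun _ _ => by simp) 1 (fun t => tendsto_const_nhds)
  -- the central window
  set L : ℝ := m.factorial * ∑' j : ℕ, (1 : ℝ) / (j + 1) ^ (m + 1) with hL
  have hL0 : 0 < L := by
    have hs : Summable (fun k : ℕ => (1 : ℝ) / (k + 1) ^ (m + 1)) := by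
      have := (summable_nat_add_iff 1).2 (Real.summable_one_div_nat_pow.2 (show 1 < m + 1 by omega))
      simpa using this
    have : 0 < ∑' j : ℕ, (1 : ℝ) / (j + 1) ^ (m + 1) :=
      hs.tsum_pos (fun j => by positivity) 0 (by positivity)
    positivity
  obtain ⟨A2, hA2, hE2⟩ := central d hd (fun n => d n ^ ((4 : ℝ) / 3) / Real.log n)
    (by
      filter_upwards [hd1, hlog, eventually_gt_atTop 0] with n h1 h2 hn
      have hp := (hd n hn).1
      have h3 : d n ^ ((4 : ℝ) / 3) ≤ 1 := Real.rpow_le_one hp.le h1 (by norm_num)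
      have h4 : d n ^ ((4 : ℝ) / 3) / Real.log n ≤ 1 := by
        rw [div_le_one (by linarith)]; linarith
      linarith [Real.pi_gt_three])
    (by
      intro t
      have h1 := (log_window d hd).const_mul |t|
      rw [mul_zero] at h1
      filter_upwards [h1.eventually (eventually_lt_nhds (show (0 : ℝ) < 1 by norm_num)), hlog,
        eventually_gt_atTop 0] with n h2 h3 hn
      have hp := (hd n hn).1
      rw [le_div_iff₀ (by linarith), abs_mul, abs_of_pos (ww_pos hp)]
      have e : ww (d n) = d n ^ ((4 : ℝ) / 3) * d n ^ ((1 : ℝ) / 6) := by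
        rw [ww, ← Real.rpow_add hp]; norm_num
      have h5 : 0 < d n ^ ((4 : ℝ) / 3) := by positivity
      rw [e]
      calc _ = d n ^ ((4 : ℝ) / 3) * (|t| * (Real.log n * d n ^ ((1 : ℝ) / 6))) := by ring
        _ ≤ d n ^ ((4 : ℝ) / 3) * 1 := by gcongr
        _ = _ := mul_one _)
    (fun n θ => ((d n ^ (m + 1) : ℝ) : ℂ) * FC m (XX (d n) θ))
    (by
      filter_upwards [eventually_gt_atTop 0] with n hn
      exact continuous_const.mul (FC_cont m (hd n hn).1))
    (L + 1)
    (by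
      have h1 : Tendsto (fun n => d n ^ (m + 1) * GG m 0 (d n)) atTop (𝓝 L) :=
        (GG_tendsto m 0 hm).comp hd0
      filter_upwards [h1.eventually (eventually_lt_nhds (show L < L + 1 by linarith)),
        eventually_gt_atTop 0] with n h2 hn θ
      have hp := (hd n hn).1
      rw [norm_mul, Complex.norm_real, Real.norm_of_nonneg (by positivity)]
      refine le_trans ?_ h2.le
      gcongr
      exact FC_norm_le m hp θ)
    (L : ℂ)
    (fun t => (FC_tendsto m hm t).comp hd0)
  have hQ := main_tendsto_one m d hd
  set P : ℕ → ℝ := fun n => (6 * n / Real.pi ^ 2) ^ (((m : ℝ) + 1) / 2) with hP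
  have hQc : Tendsto (fun n => ((P n * d n ^ (m + 1) : ℝ) : ℂ)) atTop (𝓝 1) := by
    have := (Complex.continuous_ofReal.tendsto _).comp hQ
    rw [Complex.ofReal_one] at this
    exact this
  have hII := II_ne
  have hLc : (L : ℂ) ≠ 0 := by exact_mod_cast hL0.ne'
  rw [isEquivalent_iff_exists_eq_mul]
  refine ⟨fun n => A2 n / (A1 n * ((P n * d n ^ (m + 1) : ℝ) : ℂ) * L), ?_, ?_⟩
  · have := hA2.div ((hA1.mul hQc).mul_const (L : ℂ)) (by simp [hII, hLc])
    have e : (L : ℂ) * II / (1 * II * 1 * L) = 1 := by field_simp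
    rw [e] at this
    exact this
  · have hA1ne : ∀ᶠ n in atTop, A1 n ≠ 0 := hA1.eventually_ne (by simp [hII])
    filter_upwards [hE1, hE2, hA1ne, eventually_gt_atTop 0] with n h1 h2 h3 hn
    have hp := (hd n hn).1
    have hn' : (0 : ℝ) < n := by exact_mod_cast hn
    have hPpos : 0 < P n := by simp only [hP]; positivity
    have hcau := cauchy hp n
    rw [intervalIntegral.integral_of_le (by linarith [Real.pi_pos]),
      ← MeasureTheory.integral_Icc_eq_integral_Ioc] at hcau
    simp only [mul_one] at h1
    rw [h1] at hcau
    have h2' : ((d n ^ (m + 1) : ℝ) : ℂ) * ∫ θ in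
            Set.Icc (-(d n ^ ((4 : ℝ) / 3) / Real.log n)) (d n ^ ((4 : ℝ) / 3) / Real.log n),
            gC (Complex.exp (-(d n : ℂ) + θ * Complex.I)) *
              FC m (Complex.exp (-(d n : ℂ) + θ * Complex.I)) *
              Complex.exp (-(θ * n) * Complex.I) = gC (XX (d n) 0) * ww (d n) * A2 n := by
      rw [← h2, ← MeasureTheory.integral_const_mul]
      congr 1
      ext θ
      simp only [XX]
      ring
    simp only [Pi.mul_apply]
    generalize (∫ θ in
            Set.Icc (-(d n ^ ((4 : ℝ) / 3) / Real.log n)) (d n ^ ((4 : ℝ) / 3) / Real.log n),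
            gC (Complex.exp (-(d n : ℂ) + θ * Complex.I)) *
              FC m (Complex.exp (-(d n : ℂ) + θ * Complex.I)) *
              Complex.exp (-(θ * n) * Complex.I)) = J at h2' ⊢
    have e1 : ((Fintype.card (Nat.Partition n) : ℝ) * P n * (m.factorial : ℝ) *
        ∑' j : ℕ, (1 : ℝ) / (j + 1) ^ (m + 1)) = (Fintype.card (Nat.Partition n) : ℝ) * P n * L := by
      rw [hL]; ring
    have e2 : (6 * (n : ℝ) / Real.pi ^ 2) ^ (((m : ℝ) + 1) / 2) = P n := rfl
    rw [e2, e1]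
    have e3 : (Real.exp (n * d n) : ℂ) * (Real.exp (-d n) : ℂ) ^ n = 1 := by
      rw [← Complex.ofReal_pow, ← Complex.ofReal_mul, ← Real.exp_nat_mul, ← Real.exp_add]
      simp
    have hD : ((d n ^ (m + 1) : ℝ) : ℂ) ≠ 0 := by
      exact_mod_cast (by positivity : d n ^ (m + 1) ≠ 0)
    have hPc : (P n : ℂ) ≠ 0 := by exact_mod_cast hPpos.ne'
    have hpi : (Real.pi : ℂ) ≠ 0 := by exact_mod_cast Real.pi_ne_zero
    have hJ : J = gC (XX (d n) 0) * ww (d n) * A2 n / ((d n ^ (m + 1) : ℝ) : ℂ) := by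
      rw [eq_div_iff hD, mul_comm]; exact h2'
    have hcard : (Fintype.card (Nat.Partition n) : ℂ) =
        (Real.exp (n * d n) : ℂ) * (gC (XX (d n) 0) * ww (d n) * A1 n) / (2 * Real.pi) := by
      rw [hcau, eq_div_iff (by simp [hpi])]
      linear_combination (-(Fintype.card (Nat.Partition n) : ℂ) * (2 * Real.pi)) * e3
    clear_value L P
    have e4 : (((Fintype.card (Nat.Partition n) : ℝ) * P n * L : ℝ) : ℂ) =
        (Fintype.card (Nat.Partition n) : ℂ) * (P n : ℂ) * (L : ℂ) := by push_cast; ring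
    have e5 : ((P n * d n ^ (m + 1) : ℝ) : ℂ) = (P n : ℂ) * ((d n ^ (m + 1) : ℝ) : ℂ) :=
      Complex.ofReal_mul _ _
    have e6 : ((Real.exp (n * d n) / (2 * Real.pi) : ℝ) : ℂ) =
        (Real.exp (n * d n) : ℂ) / (2 * (Real.pi : ℂ)) := by
      rw [Complex.ofReal_div, Complex.ofReal_mul, Complex.ofReal_ofNat]
    rw [hJ, e4, e5, e6, hcard]
    generalize ((d n ^ (m + 1) : ℝ) : ℂ) = D at hD ⊢
    field_simp
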